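/- arXiv:1511.07846 — 3 statements merged into one kernel-verified Lean document; each statement's English description precedes it below -/
import Mathlib

section
/- coGroup is a homomorphism on both inputs from bag union to the full outer join with componentwise bag union: for all X₁ X₂ : Multiset (κ × α) and Y₁ Y₂ : Multiset (κ × β), coGroup (X₁ + X₂) (Y₁ + Y₂) = foj (fun s t => (s.1 + t.1, s.2 + t.2)) (coGroup X₁ Y₁) (coGroup X₂ Y₂). -/
/-- CoGroup two keyed bags: one entry per distinct key, pairing the bag of
`X`-values with the bag of `Y`-values for that key. -/
def coGroup {κ α β : Type*} [DecidableEq κ]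
    (X : Multiset (κ × α)) (Y : Multiset (κ × β)) :
    Multiset (κ × (Multiset α × Multiset β)) :=
  (((X.map Prod.fst) + (Y.map Prod.fst)).dedup).map
    (fun k => (k, ((X.filter (fun p => p.1 = k)).map Prod.snd,
                   (Y.filter (fun q => q.1 = k)).map Prod.snd)))

/-- Full outer join of two keyed bags. -/
def foj {κ α : Type*} [DecidableEq κ] (op : α → α → α)
    (X Y : Multiset (κ × α)) : Multiset (κ × α) :=
  X.bind (fun p => (Y.filter (fun q => q.1 = p.1)).map (fun q => (p.1, op p.2 q.2)))
    + X.filter (fun p => p.1 ∉ Y.map Prod.fst)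
    + Y.filter (fun q => q.1 ∉ X.map Prod.fst)

/-!
The bag of values under a key is additive in the keyed bag and vanishes when the key is absent.
Full outer join with an addition that has a zero therefore acts on the graphs of two such
functions as pointwise addition over the union of the key sets: a key missing on one side
contributes `0` there, which is exactly the unmatched case of the join.
-/

/-- The bag of values that a keyed bag holds under one key; `coGroup X Y` is the graph of
`fun k => (valuesAt X k, valuesAt Y k)` over the keys that occur in `X` or `Y`. -/
def valuesAt {κ α : Type*} [DecidableEq κ] (X : Multiset (κ × α)) (k : κ) : Multiset α :=
  (X.filter (fun p => p.1 = k)).map Prod.snd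

section ValuesAt

variable {κ α : Type*} [DecidableEq κ]

theorem valuesAt_add (X Y : Multiset (κ × α)) (k : κ) :
    valuesAt (X + Y) k = valuesAt X k + valuesAt Y k := by
  rw [valuesAt, Multiset.filter_add, Multiset.map_add, valuesAt, valuesAt]

theorem valuesAt_eq_zero {X : Multiset (κ × α)} {k : κ} (hk : k ∉ X.map Prod.fst) :
    valuesAt X k = 0 := by
  rw [valuesAt, Multiset.map_eq_zero, Multiset.filter_eq_nil]
  rintro p hp rfl
  exact hk (Multiset.mem_map_of_mem Prod.fst hp)

end ValuesAt

section UnionAndBind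

variable {ι : Type*} [DecidableEq ι]

theorem dedup_add_eq_union (s t : Multiset ι) : (s + t).dedup = s.dedup ∪ t.dedup := by
  simp only [← Multiset.toFinset_val, Multiset.toFinset_add, Finset.union_val]

theorem union_eq_add_filter_notMem (s : Multiset ι) {t : Multiset ι} (ht : t.Nodup) :
    s ∪ t = s + t.filter (· ∉ s) := by
  ext a
  rw [Multiset.count_union, Multiset.count_add, Multiset.count_filter]
  by_cases hs : a ∈ s
  · have hle : t.count a ≤ s.count a :=
      (Multiset.nodup_iff_count_le_one.mp ht a).trans (Multiset.one_le_count_iff_mem.mpr hs)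
    simp [hs, hle]
  · simp [hs]

theorem bind_filter_eq_of_nodup (s : Multiset ι) {t : Multiset ι} (ht : t.Nodup) :
    s.bind (fun a => t.filter (· = a)) = s.filter (· ∈ t) := by
  induction s using Multiset.induction_on with
  | empty => simp
  | cons a s ih =>
    rw [Multiset.cons_bind, ih, Multiset.filter_eq', Multiset.count_eq_of_nodup ht,
      Multiset.filter_cons]
    split_ifs <;> simp

end UnionAndBind

section FullOuterJoin

variable {κ γ : Type*} [DecidableEq κ]

theorem foj_map_prodMk (op : γ → γ → γ) (s : Multiset κ) {t : Multiset κ} (ht : t.Nodup)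
    (f g : κ → γ) :
    foj op (s.map (fun k => (k, f k))) (t.map (fun k => (k, g k)))
      = (s.filter (· ∈ t)).map (fun k => (k, op (f k) (g k)))
        + (s.filter (· ∉ t)).map (fun k => (k, f k))
        + (t.filter (· ∉ s)).map (fun k => (k, g k)) := by
  have hmatch (k : κ) : (t.filter (· = k)).map (fun l => (k, op (f k) (g l)))
      = (t.filter (· = k)).map (fun l => (l, op (f l) (g l))) :=
    Multiset.map_congr rfl fun l hl => by rw [Multiset.of_mem_filter hl]
  simp only [foj, Multiset.filter_map, Multiset.map_map, Function.comp_def, Multiset.map_id',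
    Multiset.bind_map, hmatch]
  rw [← Multiset.map_bind, bind_filter_eq_of_nodup s ht]

theorem foj_add_map_prodMk [AddZeroClass γ] {s t : Multiset κ} (ht : t.Nodup) {f g : κ → γ}
    (hf : ∀ k ∉ s, f k = 0) (hg : ∀ k ∉ t, g k = 0) :
    foj (· + ·) (s.map (fun k => (k, f k))) (t.map (fun k => (k, g k)))
      = (s ∪ t).map (fun k => (k, f k + g k)) := by
  have hleft : (s.filter (· ∉ t)).map (fun k => (k, f k))
      = (s.filter (· ∉ t)).map (fun k => (k, f k + g k)) :=
    Multiset.map_congr rfl fun k hk => by rw [hg k (Multiset.mem_filter.mp hk).2, add_zero]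
  have hright : (t.filter (· ∉ s)).map (fun k => (k, g k))
      = (t.filter (· ∉ s)).map (fun k => (k, f k + g k)) :=
    Multiset.map_congr rfl fun k hk => by rw [hf k (Multiset.mem_filter.mp hk).2, zero_add]
  rw [foj_map_prodMk _ s ht, hleft, hright, ← Multiset.map_add, ← Multiset.map_add,
    Multiset.filter_add_not, union_eq_add_filter_notMem s ht]

end FullOuterJoin

section CoGroup

variable {κ α β : Type*} [DecidableEq κ]

theorem coGroup_eq_map_valuesAt (X : Multiset (κ × α)) (Y : Multiset (κ × β)) :
    coGroup X Y = (X.map Prod.fst + Y.map Prod.fst).dedup.map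
      (fun k => (k, (valuesAt X k, valuesAt Y k))) :=
  rfl

theorem valuesAt_prodMk_eq_zero {X : Multiset (κ × α)} {Y : Multiset (κ × β)} {k : κ}
    (hk : k ∉ (X.map Prod.fst + Y.map Prod.fst).dedup) : (valuesAt X k, valuesAt Y k) = 0 := by
  rw [Multiset.mem_dedup, Multiset.mem_add, not_or] at hk
  rw [valuesAt_eq_zero hk.1, valuesAt_eq_zero hk.2, Prod.mk_zero_zero]

end CoGroup

/-- `coGroup` is a homomorphism on both inputs from bag union to the full outer
join with componentwise bag union. -/
theorem coGroup_hom {κ α β : Type*} [DecidableEq κ]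
    (X₁ X₂ : Multiset (κ × α)) (Y₁ Y₂ : Multiset (κ × β)) :
    coGroup (X₁ + X₂) (Y₁ + Y₂)
      = foj (fun s t => (s.1 + t.1, s.2 + t.2)) (coGroup X₁ Y₁) (coGroup X₂ Y₂) := by
  have hkeys : ((X₁ + X₂).map Prod.fst + (Y₁ + Y₂).map Prod.fst).dedup
      = (X₁.map Prod.fst + Y₁.map Prod.fst).dedup
        ∪ (X₂.map Prod.fst + Y₂.map Prod.fst).dedup := by
    rw [Multiset.map_add, Multiset.map_add, add_add_add_comm, dedup_add_eq_union]
  simp only [coGroup_eq_map_valuesAt, hkeys, valuesAt_add]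
  exact (foj_add_map_prodMk (Multiset.nodup_dedup _) (fun _ => valuesAt_prodMk_eq_zero)
    (fun _ => valuesAt_prodMk_eq_zero)).symm
end

section
/- Both coGroup inputs can be recovered from the coGroup result: for all X : Multiset (κ × α) and Y : Multiset (κ × β), (coGroup X Y).bind (fun p => p.2.1.map (fun x => (p.1, x))) = X and (coGroup X Y).bind (fun p => p.2.2.map (fun y => (p.1, y))) = Y. -/
section Fibers

variable {ι κ : Type*} [DecidableEq κ]

theorem bind_filter_fiber (K : Multiset κ) (s : Multiset ι) (f : ι → κ) :
    K.bind (fun k => s.filter (fun i => f i = k)) =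
      s.bind (fun i => Multiset.replicate (K.count (f i)) i) := by
  have fiber_bind_singleton (i : ι) :
      K.bind (fun k => if f i = k then {i} else 0) =
        Multiset.replicate (K.count (f i)) i := by
    rw [← Multiset.bind_filter, Multiset.filter_eq, Multiset.bind_singleton,
      Multiset.map_replicate]
  simp only [Multiset.filter_eq_bind s]
  rw [Multiset.bind_bind]
  simp only [fiber_bind_singleton]

theorem bind_filter_fiber_eq_self {K : Multiset κ} {s : Multiset ι} {f : ι → κ}
    (hK : K.Nodup) (hf : ∀ i ∈ s, f i ∈ K) :
    K.bind (fun k => s.filter (fun i => f i = k)) = s := by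
  calc
    K.bind (fun k => s.filter (fun i => f i = k))
      = s.bind (fun i => Multiset.replicate (K.count (f i)) i) := bind_filter_fiber K s f
    _ = s.bind (fun i => {i}) := Multiset.bind_congr fun i hi => by
      rw [Multiset.count_eq_one_of_mem hK (hf i hi), Multiset.replicate_one]
    _ = s := by rw [Multiset.bind_singleton, Multiset.map_id']

end Fibers

section KeyedBags

variable {κ α : Type*} [DecidableEq κ]

theorem map_mk_map_snd_filter_fst_eq (X : Multiset (κ × α)) (k : κ) :
    ((X.filter (fun p => p.1 = k)).map Prod.snd).map (fun x => (k, x)) =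
      X.filter (fun p => p.1 = k) := by
  have mk_snd_eq_self : ∀ p ∈ X.filter (fun p => p.1 = k), (k, p.2) = p := fun p hp =>
    Prod.ext (Multiset.of_mem_filter hp).symm rfl
  rw [Multiset.map_map]
  exact (Multiset.map_congr rfl mk_snd_eq_self).trans (Multiset.map_id' _)

theorem bind_map_mk_map_snd_filter_fst {K : Multiset κ} {X : Multiset (κ × α)}
    (hK : K.Nodup) (hX : X.map Prod.fst ⊆ K) :
    K.bind (fun k => ((X.filter (fun p => p.1 = k)).map Prod.snd).map (fun x => (k, x))) = X := by
  simp only [map_mk_map_snd_filter_fst_eq]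
  exact bind_filter_fiber_eq_self hK fun _ hp => hX (Multiset.mem_map_of_mem Prod.fst hp)

end KeyedBags

/-- Both coGroup inputs can be recovered from the coGroup result. -/
theorem coGroup_unnest {κ α β : Type*} [DecidableEq κ]
    (X : Multiset (κ × α)) (Y : Multiset (κ × β)) :
    (coGroup X Y).bind (fun p => p.2.1.map (fun x => (p.1, x))) = X ∧
    (coGroup X Y).bind (fun p => p.2.2.map (fun y => (p.1, y))) = Y := by
  have keys_nodup := Multiset.nodup_dedup (X.map Prod.fst + Y.map Prod.fst)
  have left_keys_subset : X.map Prod.fst ⊆ (X.map Prod.fst + Y.map Prod.fst).dedup :=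
    Multiset.subset_dedup'.2 (Multiset.subset_of_le (Multiset.le_add_right _ _))
  have right_keys_subset : Y.map Prod.fst ⊆ (X.map Prod.fst + Y.map Prod.fst).dedup :=
    Multiset.subset_dedup'.2 (Multiset.subset_of_le (Multiset.le_add_left _ _))
  simp only [coGroup, Multiset.bind_map]
  exact ⟨bind_map_mk_map_snd_filter_fst keys_nodup left_keys_subset,
    bind_map_mk_map_snd_filter_fst keys_nodup right_keys_subset⟩
end

section
/- Flattening a keyed merge with a per-key additive map yields the bag union of the flattened parts (sMap2 judgment): let op : M → M → M and f : κ → M → Multiset β satisfy f k (op a b) = f k a + f k b for all k, a, b, and let X Y : Multiset (κ × M) with (X.map Prod.fst).Nodup and (Y.map Prod.fst).Nodup. Then (foj op X Y).bind (fun p => f p.1 p.2) = X.bind (fun p => f p.1 p.2) + Y.bind (fun p => f p.1 p.2). -/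
/-!
Sum an additive map over the join. A pair of `X` whose key occurs `n` times in `Y` contributes its
value `n` times through the matched pairs, and once through the unmatched part if `n = 0`: it is
counted `max n 1` times in all, and symmetrically for `Y`. When no shared key is repeated, all these
multiplicities are `1`. Flattening is the case of sums in the monoid of bags, to which
`Multiset.bind` unfolds.
-/

section MultisetSums

variable {γ δ κ A : Type*} [AddCommMonoid A]

theorem sum_map_filter_eq_sum_map_ite (s : Multiset γ) (p : γ → Prop) [DecidablePred p]
    (g : γ → A) :
    ((s.filter p).map g).sum = (s.map fun a => if p a then g a else 0).sum := by
  rw [Multiset.filter_eq_bind, Multiset.map_bind, Multiset.sum_bind]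
  congr! 3 with a
  split_ifs <;> simp

theorem sum_map_sum_map_filter_comm (s : Multiset γ) (t : Multiset δ) (r : γ → δ → Prop)
    [∀ a b, Decidable (r a b)] (g : γ → δ → A) :
    (s.map fun a => ((t.filter (r a)).map (g a)).sum).sum
      = (t.map fun b => ((s.filter (r · b)).map (g · b)).sum).sum := by
  simp only [sum_map_filter_eq_sum_map_ite]
  exact Multiset.sum_map_sum_map s t

variable [DecidableEq κ]

theorem sum_map_const_filter_eq_count_nsmul (s : Multiset γ) (key : γ → κ) (k : κ) (c : A) :
    ((s.filter fun a => key a = k).map fun _ => c).sum = (s.map key).count k • c := by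
  simp only [Multiset.map_const', Multiset.sum_replicate, Multiset.count_map, eq_comm]

theorem sum_map_count_nsmul_add_sum_map_filter_notMem (s : Multiset γ) (key : γ → κ)
    (t : Multiset κ) (g : γ → A) :
    (s.map fun a => t.count (key a) • g a).sum + ((s.filter fun a => key a ∉ t).map g).sum
      = (s.map fun a => max (t.count (key a)) 1 • g a).sum := by
  rw [sum_map_filter_eq_sum_map_ite, ← Multiset.sum_map_add]
  refine congrArg _ (Multiset.map_congr rfl fun a _ => ?_)
  by_cases h : key a ∈ t
  · simp [h, max_eq_left (Multiset.one_le_count_iff_mem.2 h)]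
  · simp [h]

end MultisetSums

section Join

variable {κ M A : Type*} [DecidableEq κ]

/-- Inner join of two keyed bags: the matched part of `foj`. A key occurring `m` times in `X` and
`n` times in `Y` occurs `m * n` times. -/
def innerJoin (op : M → M → M) (X Y : Multiset (κ × M)) : Multiset (κ × M) :=
  X.bind fun p => (Y.filter fun q => q.1 = p.1).map fun q => (p.1, op p.2 q.2)

theorem foj_eq_innerJoin_add (op : M → M → M) (X Y : Multiset (κ × M)) :
    foj op X Y = innerJoin op X Y + X.filter (fun p => p.1 ∉ Y.map Prod.fst)
      + Y.filter (fun q => q.1 ∉ X.map Prod.fst) :=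
  rfl

variable [AddCommMonoid A]

theorem sum_map_innerJoin (op : M → M → M) (f : κ → M → A)
    (hf : ∀ (k : κ) (a b : M), f k (op a b) = f k a + f k b)
    (X Y : Multiset (κ × M)) :
    ((innerJoin op X Y).map fun p => f p.1 p.2).sum
      = (X.map fun p => (Y.map Prod.fst).count p.1 • f p.1 p.2).sum
        + (Y.map fun q => (X.map Prod.fst).count q.1 • f q.1 q.2).sum := by
  have matched (p : κ × M) :
      ((Y.filter fun q => q.1 = p.1).map fun q => f p.1 (op p.2 q.2)).sum
        = (Y.map Prod.fst).count p.1 • f p.1 p.2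
          + ((Y.filter fun q => q.1 = p.1).map fun q => f q.1 q.2).sum := by
    rw [← sum_map_const_filter_eq_count_nsmul, ← Multiset.sum_map_add]
    refine congrArg _ (Multiset.map_congr rfl fun q hq => ?_)
    rw [hf, (Multiset.mem_filter.1 hq).2]
  have exchanged :
      (X.map fun p => ((Y.filter fun q => q.1 = p.1).map fun q => f q.1 q.2).sum).sum
        = (Y.map fun q => (X.map Prod.fst).count q.1 • f q.1 q.2).sum := by
    rw [sum_map_sum_map_filter_comm X Y fun p q => q.1 = p.1]
    simp only [← sum_map_const_filter_eq_count_nsmul, eq_comm]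
  simp only [innerJoin, Multiset.map_bind, Multiset.map_map, Function.comp_def,
    Multiset.sum_bind, matched, Multiset.sum_map_add, exchanged]

theorem sum_map_foj (op : M → M → M) (f : κ → M → A)
    (hf : ∀ (k : κ) (a b : M), f k (op a b) = f k a + f k b)
    (X Y : Multiset (κ × M)) :
    ((foj op X Y).map fun p => f p.1 p.2).sum
      = (X.map fun p => max ((Y.map Prod.fst).count p.1) 1 • f p.1 p.2).sum
        + (Y.map fun q => max ((X.map Prod.fst).count q.1) 1 • f q.1 q.2).sum := by
  rw [foj_eq_innerJoin_add, Multiset.map_add, Multiset.map_add, Multiset.sum_add,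
    Multiset.sum_add, sum_map_innerJoin op f hf,
    ← sum_map_count_nsmul_add_sum_map_filter_notMem X,
    ← sum_map_count_nsmul_add_sum_map_filter_notMem Y]
  abel

theorem sMap2_hom_general (op : M → M → M) (f : κ → M → A)
    (hf : ∀ (k : κ) (a b : M), f k (op a b) = f k a + f k b)
    (X Y : Multiset (κ × M))
    (hX : ∀ q ∈ Y, (X.map Prod.fst).count q.1 ≤ 1)
    (hY : ∀ p ∈ X, (Y.map Prod.fst).count p.1 ≤ 1) :
    ((foj op X Y).map fun p => f p.1 p.2).sum
      = (X.map fun p => f p.1 p.2).sum + (Y.map fun q => f q.1 q.2).sum := by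
  rw [sum_map_foj op f hf]
  congr 2
  · exact Multiset.map_congr rfl fun p hp => by rw [max_eq_right (hY p hp), one_nsmul]
  · exact Multiset.map_congr rfl fun q hq => by rw [max_eq_right (hX q hq), one_nsmul]

end Join

/-- Flattening a keyed merge with a per-key additive map yields the bag union
of the flattened parts (sMap2 judgment). -/
theorem sMap2_hom {κ M β : Type*} [DecidableEq κ]
    (op : M → M → M) (f : κ → M → Multiset β)
    (hf : ∀ (k : κ) (a b : M), f k (op a b) = f k a + f k b)
    (X Y : Multiset (κ × M))
    (hX : (X.map Prod.fst).Nodup) (hY : (Y.map Prod.fst).Nodup) :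
    (foj op X Y).bind (fun p => f p.1 p.2)
      = X.bind (fun p => f p.1 p.2) + Y.bind (fun p => f p.1 p.2) :=
  sMap2_hom_general op f hf X Y (fun q _ => Multiset.nodup_iff_count_le_one.1 hX q.1)
    fun p _ => Multiset.nodup_iff_count_le_one.1 hY p.1
end
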